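/- Let H=(V_H,E_H) be a fixed graph with at least two edges, let P be a strict partial order on E_H with height(P) the maximum size of a chain in P, let ψ be a label multiplicity distribution, and set ρ_H = min over subgraphs I=(V_I,E_I) of H with at least two edges of |V_I|/(|E_I|−1). Let β,T:ℕ→ℕ with T(n)≥β(n) for all n, and suppose there exists n₀ such that β(n)≥height(P) for all n≥n₀. If β(n)/T(n)·n^{ρ_H} → 0 as n→∞, then the probability that a random temporal graph drawn from Γ_{[n]}(ψ,T(n)) contains (H,P) as a β(n)-temporal motif tends to 0 as n→∞. -/

import Mathlib

open MeasureTheory ProbabilityTheory Filter Set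
open scoped ENNReal NNReal Topology

noncomputable section

namespace RTG

/-- A temporal graph on vertex type `V`, given by the finite set of real time labels
attached to each potential edge (unordered pair of vertices). -/
abbrev TGraph (V : Type*) := Sym2 V → Finset ℝ

/-- `P` is a strict partial order supported on the set `s`. -/
def StrictPartialOrderOn {α : Type*} (s : Set α) (P : α → α → Prop) : Prop :=
  (∀ a, ¬ P a a) ∧ (∀ a b c, P a b → P b c → P a c) ∧ ∀ a b, P a b → a ∈ s ∧ b ∈ s

/-- The temporal graph `Λ` contains `(H, P)` as a `δ`-temporal motif. -/
def Contains {VH V : Type*} (H : SimpleGraph VH) (P : Sym2 VH → Sym2 VH → Prop)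
    (Λ : TGraph V) (δ : ℝ) : Prop :=
  ∃ Φ : VH → V, Function.Injective Φ ∧
    ∃ lab : Sym2 VH → ℝ,
      (∀ e ∈ H.edgeSet, lab e ∈ Λ (Sym2.map Φ e)) ∧
      (∀ e f, P e f → lab e < lab f) ∧
      (∀ e ∈ H.edgeSet, ∀ f ∈ H.edgeSet, lab e - lab f < δ)

/-- The sparsity `ρ_H` of a graph `H`: the minimum over subgraphs with at least two
edges of `|V_I| / (|E_I| - 1)`. -/
def sparsity {VH : Type*} (H : SimpleGraph VH) : ℝ :=
  sInf {x : ℝ | ∃ I : H.Subgraph, 2 ≤ I.edgeSet.ncard ∧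
    x = (I.verts.ncard : ℝ) / ((I.edgeSet.ncard : ℝ) - 1)}

/-- The space of label data on a single edge: a number `k` of labels together with the
tuple of `k` label values (indexed in order of sampling). -/
abbrev LabelSpace := Σ k : ℕ, Fin k → ℝ

/-- The uniform distribution on `(0, 1]`. -/
def unif01 : Measure ℝ := volume.restrict (Set.Ioc 0 1)

/-- The uniform distribution on `{1, …, T}` (as a measure on `ℝ`). -/
def unifDisc (T : ℕ) : Measure ℝ :=
  (T : ℝ≥0∞)⁻¹ • ∑ k ∈ Finset.Icc 1 T, Measure.dirac (k : ℝ)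

/-- The distribution of the label data of a single edge: the number of labels is drawn
according to `ψ` and, independently, each label value is drawn according to `ν`. -/
def edgeMeasure (ν : Measure ℝ) (ψ : Measure ℕ) : Measure LabelSpace :=
  Measure.sum fun k => ψ {k} • (Measure.pi fun _ : Fin k => ν).map (Sigma.mk k)

/-- The doubly random temporal graph model on vertex set `V` with label value
distribution `ν` and label multiplicity distribution `ψ`: all edges receive independent
identically distributed label data. -/
def model (V : Type*) [Fintype V] [DecidableEq V] (ν : Measure ℝ) (ψ : Measure ℕ) :
    Measure (Sym2 V → LabelSpace) :=
  Measure.pi fun _ : Sym2 V => edgeMeasure ν ψ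

/-- The continuous doubly random temporal graph `Γ_V(ψ)`. -/
abbrev contModel (V : Type*) [Fintype V] [DecidableEq V] (ψ : Measure ℕ) :
    Measure (Sym2 V → LabelSpace) := model V unif01 ψ

/-- The discrete doubly random temporal graph `Γ_V(ψ, T)`. -/
abbrev discModel (V : Type*) [Fintype V] [DecidableEq V] (ψ : Measure ℕ) (T : ℕ) :
    Measure (Sym2 V → LabelSpace) := model V (unifDisc T) ψ

/-- The temporal graph determined by a sample `ω` of the model: each non-loop edge
carries the sampled set of labels. -/
def toTGraph {V : Type*} [DecidableEq V] (ω : Sym2 V → LabelSpace) : TGraph V :=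
  fun e => if e.IsDiag then ∅ else Finset.image (ω e).2 Finset.univ

/-- The `T`-discretization of a temporal graph: each label `l` is replaced by `⌈T·l⌉`. -/
def discretize {V : Type*} (T : ℕ) (Λ : TGraph V) : TGraph V :=
  fun e => (Λ e).image fun l => ((⌈(T : ℝ) * l⌉ : ℤ) : ℝ)

/-- `ψ` is a label multiplicity distribution: a probability distribution on `ℕ` with
positive finite mean and finite second moment. -/
def IsLMD (ψ : Measure ℕ) : Prop :=
  IsProbabilityMeasure ψ ∧ Integrable (fun k : ℕ => (k : ℝ)) ψ ∧
    Integrable (fun k : ℕ => (k : ℝ) ^ 2) ψ ∧ 0 < ∫ k, (k : ℝ) ∂ψ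

/-- The mean `r` of a label multiplicity distribution. -/
def lmdMean (ψ : Measure ℕ) : ℝ := ∫ k, (k : ℝ) ∂ψ

/-- The second moment `r₂` of a label multiplicity distribution. -/
def lmdSq (ψ : Measure ℕ) : ℝ := ∫ k, (k : ℝ) ^ 2 ∂ψ

/-- `q = P[Q > 0]` for a label multiplicity distribution. -/
def lmdPos (ψ : Measure ℕ) : ℝ := (ψ {k | 0 < k}).toReal

/-- `v` is reachable from the set `S` by time `t` in the temporal graph `Λ`. -/
def ReachBy {V : Type*} (Λ : TGraph V) (S : Set V) (t : ℝ) (v : V) : Prop :=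
  v ∈ S ∨ ∃ (k : ℕ) (f : ℕ → V) (ts : ℕ → ℝ), 0 < k ∧ f 0 ∈ S ∧ f k = v ∧
    (∀ i < k, ts i ∈ Λ s(f i, f (i + 1))) ∧
    (∀ i j, i < j → j < k → ts i < ts j) ∧ ts (k - 1) ≤ t

/-- The reachability ball `B_Λ(S, t)`. -/
def ball {V : Type*} (Λ : TGraph V) (S : Set V) (t : ℝ) : Set V := {v | ReachBy Λ S t v}

/-- The doubling time of the set `S` in `Λ` (with value `∞` if the reachability ball
never doubles in size). -/
def doubleTime {V : Type*} (Λ : TGraph V) (S : Set V) : ℝ≥0∞ :=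
  ⨅ (t : ℝ) (_ : 0 ≤ t ∧ 2 * S.ncard ≤ (ball Λ S t).ncard), ENNReal.ofReal t

/-- The doubling time of the temporal graph `Λ`: the maximum doubling time over all
nonempty vertex sets of size at most half the number of vertices. -/
def doubleAll {V : Type*} [Fintype V] (Λ : TGraph V) : ℝ≥0∞ :=
  ⨆ (S : Set V) (_ : S.Nonempty ∧ 2 * S.ncard ≤ Fintype.card V), doubleTime Λ S

/-- `Double⁻`: the maximum doubling time over nonempty sets of size at most `n/4`. -/
def doubleSmall {V : Type*} [Fintype V] (Λ : TGraph V) : ℝ≥0∞ :=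
  ⨆ (S : Set V) (_ : S.Nonempty ∧ 4 * S.ncard ≤ Fintype.card V), doubleTime Λ S

/-- `Double⁺`: the maximum doubling time over sets of size in `(n/4, n/2]`. -/
def doubleLarge {V : Type*} [Fintype V] (Λ : TGraph V) : ℝ≥0∞ :=
  ⨆ (S : Set V) (_ : Fintype.card V < 4 * S.ncard ∧ 2 * S.ncard ≤ Fintype.card V),
    doubleTime Λ S

/-- The partial reversal `ℛ(Λ, t)`: every label `l < t` is replaced by `t - l`. -/
def reverse {V : Type*} (Λ : TGraph V) (t : ℝ) : TGraph V :=
  fun e => (Λ e).image fun l => if l < t then t - l else l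

/-- The rank of a time `x` among all the labels of the sample `ω`: the number of labels
(on genuine, non-loop, edges) that are at most `x`. -/
def rank {V : Type*} [Fintype V] [DecidableEq V] (ω : Sym2 V → LabelSpace) (x : ℝ) : ℕ :=
  ∑ e ∈ Finset.univ.filter (fun e : Sym2 V => ¬ e.IsDiag),
    Nat.card {i : Fin (ω e).1 // (ω e).2 i ≤ x}

/-- The order discretization `𝒢^O` of the sample `ω`: each label is replaced by its rank
among all labels. -/
def orderDisc {V : Type*} [Fintype V] [DecidableEq V] (ω : Sym2 V → LabelSpace) :
    TGraph V :=
  fun e => if e.IsDiag then ∅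
    else Finset.image (fun i => (rank ω ((ω e).2 i) : ℝ)) Finset.univ


/-!
Let `I` be a subgraph of `H` attaining the sparsity, fix an edge `e₀` of `I` and a placement of the
vertices of `I`. If it extends to a `β`-temporal motif, then some label `t` of `e₀` has a label of
every other edge of `I` within distance `β`. Condition on the labels of `e₀`: there are `r` of
them on average, and for fixed `t` the other edges are independent, each having a label near `t`
with probability at most `r * (2 * β / T)`. Summing over the at most `n ^ |V_I|` placements, the
motif has probability at most `n ^ |V_I| * r * (2 * r * β / T) ^ (|E_I| - 1)`, which is a constant
times the `(|E_I| - 1)`-st power of `β / T * n ^ ρ_H`.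
-/

section Measure

theorem measurableSet_sigma_iff {ι : Type*} {X : ι → Type*} [∀ i, MeasurableSpace (X i)]
    {s : Set (Σ i, X i)} : MeasurableSet s ↔ ∀ i, MeasurableSet (Sigma.mk i ⁻¹' s) :=
  MeasurableSpace.measurableSet_iInf

theorem measurable_sigmaMk {ι : Type*} {X : ι → Type*} [∀ i, MeasurableSpace (X i)] (i : ι) :
    Measurable (Sigma.mk i : X i → Σ i, X i) :=
  fun _ hs => measurableSet_sigma_iff.1 hs i

theorem measurable_sigma_iff {ι Y : Type*} {X : ι → Type*} [∀ i, MeasurableSpace (X i)]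
    [MeasurableSpace Y] {f : (Σ i, X i) → Y} :
    Measurable f ↔ ∀ i, Measurable fun x : X i => f ⟨i, x⟩ :=
  ⟨fun hf i => hf.comp (measurable_sigmaMk i),
    fun hf _ hs => measurableSet_sigma_iff.2 fun i => hf i hs⟩

theorem measurePreserving_update {ι : Type*} [Fintype ι] [DecidableEq ι] {X : ι → Type*}
    [∀ i, MeasurableSpace (X i)] (μ : ∀ i, Measure (X i)) [∀ i, IsProbabilityMeasure (μ i)]
    (i : ι) :
    MeasurePreserving (fun p : X i × (∀ j, X j) => Function.update p.2 i p.1)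
      ((μ i).prod (Measure.pi μ)) (Measure.pi μ) := by
  have hmeas : Measurable fun p : X i × (∀ j, X j) => Function.update p.2 i p.1 :=
    measurable_update'.comp measurable_swap
  refine ⟨hmeas, (Measure.pi_eq fun s hs => ?_).symm⟩
  have hbox : (fun p : X i × (∀ j, X j) => Function.update p.2 i p.1) ⁻¹' univ.pi s =
      s i ×ˢ univ.pi (Function.update s i univ) := by
    ext ⟨x, ω⟩
    simp only [mem_preimage, mem_univ_pi, mem_prod]
    rw [Function.forall_update_iff ω (fun j y => y ∈ s j),
      Function.forall_update_iff s (fun j B => ω j ∈ B)]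
    simp
  rw [Measure.map_apply hmeas (.univ_pi hs), hbox, Measure.prod_prod, Measure.pi_pi,
    ← Finset.mul_prod_erase _ _ (Finset.mem_univ i),
    ← Finset.mul_prod_erase Finset.univ _ (Finset.mem_univ i)]
  simp only [Function.update_self, measure_univ, one_mul]
  congr 1
  exact Finset.prod_congr rfl fun j hj => by rw [Function.update_of_ne (Finset.ne_of_mem_erase hj)]

theorem pi_finset_pi {ι : Type*} [Fintype ι] {X : ι → Type*}
    [∀ i, MeasurableSpace (X i)] (μ : ∀ i, Measure (X i)) [∀ i, IsProbabilityMeasure (μ i)]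
    (s : Finset ι) {B : ∀ i, Set (X i)} (hB : ∀ i ∈ s, MeasurableSet (B i)) :
    Measure.pi μ ((s : Set ι).pi B) = ∏ i ∈ s, μ i (B i) := by
  rw [← Measure.infinitePi_eq_pi, Measure.infinitePi_pi _ hB]

end Measure

section EdgeMeasure

/-- The event that some label of an edge lies in `B`. -/
def hits (B : Set ℝ) : Set LabelSpace := {x | ∃ i, x.2 i ∈ B}

/-- The `j`-th label of an edge, with the junk value `0` when the edge has at most `j` labels:
unlike the dependent `x.2 : Fin x.1 → ℝ`, it is a plain measurable function of `x`. -/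
def label (j : ℕ) (x : LabelSpace) : ℝ := if h : j < x.1 then x.2 ⟨j, h⟩ else 0

theorem exists_label_iff {x : LabelSpace} {p : ℝ → Prop} :
    (∃ i, p (x.2 i)) ↔ ∃ j < x.1, p (label j x) := by
  simp only [Fin.exists_iff, label, ← exists_prop]
  exact exists_congr fun j => exists_congr fun hj => by rw [dif_pos hj]

theorem measurable_numLabels : Measurable fun x : LabelSpace => x.1 :=
  measurable_sigma_iff.2 fun _ => measurable_const

theorem measurable_label (j : ℕ) : Measurable (label j) := by
  refine measurable_sigma_iff.2 fun k => ?_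
  simp only [label]
  split_ifs with hj
  · exact measurable_pi_apply (⟨j, hj⟩ : Fin k)
  · exact measurable_const

theorem measurableSet_exists_label {Ω : Type*} [MeasurableSpace Ω] {X : Ω → LabelSpace}
    (hX : Measurable X) {p : Ω → ℝ → Prop}
    (hp : ∀ j, MeasurableSet {ω | p ω (label j (X ω))}) :
    MeasurableSet {ω | ∃ i, p ω ((X ω).2 i)} := by
  simp only [exists_label_iff, ofPred_exists, ofPred_and]
  exact .iUnion fun j =>
    (measurableSet_lt measurable_const (measurable_numLabels.comp hX)).inter (hp j)

theorem measurableSet_hits {B : Set ℝ} (hB : MeasurableSet B) : MeasurableSet (hits B) :=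
  measurableSet_exists_label measurable_id fun j => measurable_label j hB

variable (ν : Measure ℝ) (ψ : Measure ℕ)

theorem edgeMeasure_apply {A : Set LabelSpace} (hA : MeasurableSet A) :
    edgeMeasure ν ψ A =
      ∑' k, ψ {k} * (Measure.pi fun _ : Fin k => ν) {x | (⟨k, x⟩ : LabelSpace) ∈ A} := by
  simp only [edgeMeasure, Measure.sum_apply _ hA, Measure.smul_apply, smul_eq_mul,
    Measure.map_apply (measurable_sigmaMk _) hA]
  rfl

variable [IsProbabilityMeasure ν]

theorem measurePreserving_numLabels :
    MeasurePreserving (fun x : LabelSpace => x.1) (edgeMeasure ν ψ) ψ := by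
  refine ⟨measurable_numLabels, Measure.ext_of_singleton fun k => ?_⟩
  rw [Measure.map_apply measurable_numLabels (measurableSet_singleton k),
    edgeMeasure_apply ν ψ (measurable_numLabels (measurableSet_singleton k)),
    tsum_eq_single k fun j hj => by simp [hj]]
  simp

instance isProbabilityMeasure_edgeMeasure [IsProbabilityMeasure ψ] :
    IsProbabilityMeasure (edgeMeasure ν ψ) :=
  have : IsProbabilityMeasure ((edgeMeasure ν ψ).map fun x => x.1) := by
    rwa [(measurePreserving_numLabels ν ψ).map_eq]
  Measure.isProbabilityMeasure_of_map fun x => x.1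

theorem edgeMeasure_hits_le {B : Set ℝ} (hB : MeasurableSet B) :
    edgeMeasure ν ψ (hits B) ≤ (∫⁻ k, (k : ℝ≥0∞) ∂ψ) * ν B := by
  have hunion (k : ℕ) :
      (Measure.pi fun _ : Fin k => ν) {x | (⟨k, x⟩ : LabelSpace) ∈ hits B} ≤ k * ν B :=
    calc (Measure.pi fun _ : Fin k => ν) {x | (⟨k, x⟩ : LabelSpace) ∈ hits B}
        = (Measure.pi fun _ : Fin k => ν) (⋃ i, Function.eval i ⁻¹' B) := by
          congr 1; ext x; simp [hits]
      _ ≤ ∑ i, (Measure.pi fun _ : Fin k => ν) (Function.eval i ⁻¹' B) :=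
          measure_iUnion_fintype_le _ _
      _ = k * ν B := by
          simp [(measurePreserving_eval (fun _ : Fin k => ν) _).measure_preimage
            hB.nullMeasurableSet]
  rw [edgeMeasure_apply ν ψ (measurableSet_hits hB), lintegral_countable',
    ← ENNReal.tsum_mul_right]
  refine ENNReal.tsum_le_tsum fun k => ?_
  rw [mul_comm (k : ℝ≥0∞), mul_assoc]
  gcongr
  exact hunion k

end EdgeMeasure

section Cluster

variable {ι : Type*}

/-- The event that some label `t` of the edge `i₀` has, for every edge of `s`, a label of that
edge at distance less than `δ` from `t`. -/
def clusterEvent (i₀ : ι) (s : Finset ι) (δ : ℝ) : Set (ι → LabelSpace) :=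
  {ω | ∃ j, ∀ i ∈ s, ω i ∈ hits (Metric.ball ((ω i₀).2 j) δ)}

theorem measurableSet_clusterEvent (i₀ : ι) (s : Finset ι) (δ : ℝ) :
    MeasurableSet (clusterEvent i₀ s δ) := by
  refine measurableSet_exists_label
    (p := fun (ω : ι → LabelSpace) t => ∀ i ∈ s, ω i ∈ hits (Metric.ball t δ))
    (measurable_pi_apply i₀) fun j => ?_
  simp only [ofPred_forall]
  refine Finset.measurableSet_biInter s fun i _ => ?_
  exact measurableSet_exists_label (measurable_pi_apply i) fun k => measurableSet_lt
    (((measurable_label k).comp (measurable_pi_apply i)).dist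
      ((measurable_label j).comp (measurable_pi_apply i₀))) measurable_const

variable [Fintype ι] {ν : Measure ℝ} [IsProbabilityMeasure ν] {ψ : Measure ℕ}
  [IsProbabilityMeasure ψ] {δ : ℝ} {p : ℝ≥0∞}

theorem pi_edgeMeasure_forall_hits_ball_le (hp : ∀ t, ν (Metric.ball t δ) ≤ p) (s : Finset ι)
    (t : ℝ) :
    (Measure.pi fun _ : ι => edgeMeasure ν ψ) {ω | ∀ i ∈ s, ω i ∈ hits (Metric.ball t δ)} ≤
      ((∫⁻ k, (k : ℝ≥0∞) ∂ψ) * p) ^ s.card :=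
  calc (Measure.pi fun _ : ι => edgeMeasure ν ψ) {ω | ∀ i ∈ s, ω i ∈ hits (Metric.ball t δ)}
      = ∏ _i ∈ s, edgeMeasure ν ψ (hits (Metric.ball t δ)) :=
        pi_finset_pi _ s fun _ _ => measurableSet_hits measurableSet_ball
    _ ≤ ∏ _i ∈ s, (∫⁻ k, (k : ℝ≥0∞) ∂ψ) * p := Finset.prod_le_prod' fun _ _ =>
        (edgeMeasure_hits_le ν ψ measurableSet_ball).trans (by gcongr; exact hp t)
    _ = ((∫⁻ k, (k : ℝ≥0∞) ∂ψ) * p) ^ s.card := Finset.prod_const _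

theorem pi_edgeMeasure_clusterEvent_le (hp : ∀ t, ν (Metric.ball t δ) ≤ p) {i₀ : ι}
    {s : Finset ι} (hi₀ : i₀ ∉ s) :
    (Measure.pi fun _ : ι => edgeMeasure ν ψ) (clusterEvent i₀ s δ) ≤
      (∫⁻ k, (k : ℝ≥0∞) ∂ψ) * ((∫⁻ k, (k : ℝ≥0∞) ∂ψ) * p) ^ s.card := by
  classical
  set M := Measure.pi fun _ : ι => edgeMeasure ν ψ
  set q := ((∫⁻ k, (k : ℝ≥0∞) ∂ψ) * p) ^ s.card
  -- Replacing the coordinate `i₀` by an independent copy decouples it from the edges of `s`.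
  have hresample := measurePreserving_update (fun _ : ι => edgeMeasure ν ψ) i₀
  have hA := measurableSet_clusterEvent i₀ s δ
  have hsection (x : LabelSpace) :
      M {ω | Function.update ω i₀ x ∈ clusterEvent i₀ s δ} ≤ x.1 * q :=
    calc M {ω | Function.update ω i₀ x ∈ clusterEvent i₀ s δ}
        = M (⋃ j, {ω | ∀ i ∈ s, ω i ∈ hits (Metric.ball (x.2 j) δ)}) := by
          congr 1
          ext ω
          have hkeep : ∀ i ∈ s, Function.update ω i₀ x i = ω i := fun i hi =>
            Function.update_of_ne (ne_of_mem_of_not_mem hi hi₀) _ _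
          simp +contextual only [clusterEvent, mem_ofPred_eq, mem_iUnion, hkeep]
          rw [Function.update_self]
      _ ≤ ∑ j, M {ω | ∀ i ∈ s, ω i ∈ hits (Metric.ball (x.2 j) δ)} :=
          measure_iUnion_fintype_le _ _
      _ ≤ ∑ _j : Fin x.1, q := by
          gcongr; exact pi_edgeMeasure_forall_hits_ball_le hp s _
      _ = x.1 * q := by simp
  calc M (clusterEvent i₀ s δ)
      = ∫⁻ x, M {ω | Function.update ω i₀ x ∈ clusterEvent i₀ s δ} ∂edgeMeasure ν ψ := by
        rw [← hresample.measure_preimage hA.nullMeasurableSet,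
          Measure.prod_apply (hresample.measurable hA)]
        rfl
    _ ≤ ∫⁻ x, x.1 * q ∂edgeMeasure ν ψ := lintegral_mono hsection
    _ = (∫⁻ k, (k : ℝ≥0∞) ∂ψ) * q := by
        rw [(measurePreserving_numLabels ν ψ).lintegral_comp (f := fun k => k * q) .of_discrete,
          lintegral_mul_const _ .of_discrete]

end Cluster

section Motif

theorem Contains.comp_hom {W VH V : Type*} {G : SimpleGraph W} {H : SimpleGraph VH}
    {P : Sym2 VH → Sym2 VH → Prop} {Λ : TGraph V} {δ : ℝ} (h : Contains H P Λ δ) (f : G →g H)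
    (hf : Function.Injective f) : Contains G (Sym2.map f ⁻¹'o P) Λ δ := by
  obtain ⟨Φ, hΦ, lab, hmem, horder, hclose⟩ := h
  refine ⟨Φ ∘ f, hΦ.comp hf, lab ∘ Sym2.map f, fun e he => ?_, fun _ _ hef => horder _ _ hef,
    fun e he e' he' => hclose _ (f.map_mem_edgeSet he) _ (f.map_mem_edgeSet he')⟩
  simpa only [Sym2.map_map, Function.comp_apply] using hmem _ (f.map_mem_edgeSet he)

theorem Contains.pos {VH V : Type*} {H : SimpleGraph VH} {P : Sym2 VH → Sym2 VH → Prop}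
    {Λ : TGraph V} {δ : ℝ} (h : Contains H P Λ δ) (hH : H.edgeSet.Nonempty) : 0 < δ := by
  obtain ⟨-, -, lab, -, -, hclose⟩ := h
  obtain ⟨e, he⟩ := hH
  simpa using hclose e he e he

theorem exists_eq_of_mem_toTGraph {V : Type*} [DecidableEq V] {ω : Sym2 V → LabelSpace}
    {e : Sym2 V} {l : ℝ} (h : l ∈ toTGraph ω e) : ∃ j, (ω e).2 j = l := by
  unfold toTGraph at h
  split_ifs at h with hdiag
  · simp at h
  · simpa using h

theorem Contains.exists_mem_clusterEvent {W V : Type*} [DecidableEq V]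
    {G : SimpleGraph W} {P : Sym2 W → Sym2 W → Prop} {ω : Sym2 V → LabelSpace} {δ : ℝ}
    (h : Contains G P (toTGraph ω) δ) {e₀ : Sym2 W} (he₀ : e₀ ∈ G.edgeSet) {s : Finset (Sym2 W)}
    (hs : ↑s ⊆ G.edgeSet) :
    ∃ Φ : W ↪ V, ω ∈ clusterEvent (e₀.map Φ) (s.map Φ.sym2Map) δ := by
  obtain ⟨Φ, hΦ, lab, hmem, -, hclose⟩ := h
  obtain ⟨j, hj⟩ := exists_eq_of_mem_toTGraph (hmem e₀ he₀)
  refine ⟨⟨Φ, hΦ⟩, j, Finset.forall_mem_map.2 fun e he => ?_⟩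
  obtain ⟨i, hi⟩ := exists_eq_of_mem_toTGraph (hmem e (hs he))
  have hdist : |lab e - lab e₀| < δ :=
    abs_sub_lt_iff.2 ⟨hclose e (hs he) e₀ he₀, hclose e₀ he₀ e (hs he)⟩
  rw [← hi, ← hj] at hdist
  exact ⟨i, hdist⟩

theorem model_contains_le {W V : Type*} [Finite W] [Fintype V] [DecidableEq V]
    {G : SimpleGraph W} (hG : G.edgeSet.Nonempty) (P : Sym2 W → Sym2 W → Prop)
    {ν : Measure ℝ} [IsProbabilityMeasure ν] (ψ : Measure ℕ) [IsProbabilityMeasure ψ]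
    {δ : ℝ} {p : ℝ≥0∞} (hp : ∀ t, ν (Metric.ball t δ) ≤ p) :
    model V ν ψ {ω | Contains G P (toTGraph ω) δ} ≤
      (Fintype.card V : ℝ≥0∞) ^ Nat.card W *
        ((∫⁻ k, (k : ℝ≥0∞) ∂ψ) * ((∫⁻ k, (k : ℝ≥0∞) ∂ψ) * p) ^ (G.edgeSet.ncard - 1)) := by
  classical
  have := Fintype.ofFinite W
  obtain ⟨e₀, he₀⟩ := hG
  set s := G.edgeFinset.erase e₀
  have hs : s.card = G.edgeSet.ncard - 1 := by
    rw [Finset.card_erase_of_mem (by simpa using he₀), ← SimpleGraph.coe_edgeFinset,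
      Set.ncard_coe_finset]
  have hsG : ↑s ⊆ G.edgeSet := fun e he => by simpa using Finset.mem_of_mem_erase he
  set R := (∫⁻ k, (k : ℝ≥0∞) ∂ψ) * ((∫⁻ k, (k : ℝ≥0∞) ∂ψ) * p) ^ (G.edgeSet.ncard - 1)
  have hΦ (Φ : W ↪ V) :
      model V ν ψ (clusterEvent (e₀.map Φ) (s.map Φ.sym2Map) δ) ≤ R := by
    have hnot : e₀.map Φ ∉ s.map Φ.sym2Map := fun h =>
      Finset.notMem_erase e₀ _ ((Finset.mem_map' Φ.sym2Map).1 h)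
    simpa only [R, model, Finset.card_map, hs] using
      pi_edgeMeasure_clusterEvent_le (ψ := ψ) hp hnot
  calc model V ν ψ {ω | Contains G P (toTGraph ω) δ}
      ≤ model V ν ψ (⋃ Φ : W ↪ V, clusterEvent (e₀.map Φ) (s.map Φ.sym2Map) δ) :=
        measure_mono fun ω hω => mem_iUnion.2 (hω.exists_mem_clusterEvent he₀ hsG)
    _ ≤ ∑ Φ : W ↪ V, model V ν ψ (clusterEvent (e₀.map Φ) (s.map Φ.sym2Map) δ) :=
        measure_iUnion_fintype_le _ _
    _ ≤ ∑ _Φ : W ↪ V, R := Finset.sum_le_sum fun Φ _ => hΦ Φ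
    _ = (Fintype.card (W ↪ V) : ℝ≥0∞) * R := by simp
    _ ≤ (Fintype.card V : ℝ≥0∞) ^ Nat.card W * R := by
        gcongr
        rw [Fintype.card_embedding_eq, Nat.card_eq_fintype_card]
        exact_mod_cast Nat.descFactorial_le_pow _ _

end Motif

section Discrete

theorem isProbabilityMeasure_unifDisc {T : ℕ} (hT : T ≠ 0) :
    IsProbabilityMeasure (unifDisc T) where
  measure_univ := by
    simpa [unifDisc] using
      ENNReal.inv_mul_cancel (Nat.cast_ne_zero.2 hT) (ENNReal.natCast_ne_top T)

theorem ceil_sub_floor_sub_one_le {R : Type*} [Ring R] [LinearOrder R] [IsStrictOrderedRing R]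
    [FloorRing R] (a b : R) : ⌈b⌉ - ⌊a⌋ - 1 ≤ ⌈b - a⌉ := by
  have hb : ⌈b⌉ ≤ ⌊a⌋ + 1 + ⌈b - a⌉ := by
    rw [Int.ceil_le]
    push_cast
    calc b = a + (b - a) := (add_sub_cancel a b).symm
      _ ≤ ⌊a⌋ + 1 + ⌈b - a⌉ := add_le_add (Int.lt_floor_add_one a).le (Int.le_ceil _)
  linarith

theorem card_filter_natCast_mem_Ioo_le {R : Type*} [Ring R] [LinearOrder R]
    [IsStrictOrderedRing R] [FloorRing R] (s : Finset ℕ) (a b : R) :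
    (s.filter fun k : ℕ => (k : R) ∈ Ioo a b).card ≤ ⌈b - a⌉₊ :=
  calc (s.filter fun k : ℕ => (k : R) ∈ Ioo a b).card
      ≤ (Finset.Ioo ⌊a⌋ ⌈b⌉).card := by
        refine Finset.card_le_card_of_injOn (fun k => (k : ℤ)) (fun k hk => ?_)
          Nat.cast_injective.injOn
        have hk' := (Finset.mem_filter.1 hk).2
        simpa [Int.floor_lt, Int.lt_ceil] using hk'
    _ = (⌈b⌉ - ⌊a⌋ - 1).toNat := Int.card_Ioo _ _
    _ ≤ ⌈b - a⌉.toNat := Int.toNat_le_toNat (ceil_sub_floor_sub_one_le a b)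
    _ = ⌈b - a⌉₊ := Int.ceil_toNat _

theorem unifDisc_Ioo_le (T : ℕ) (a b : ℝ) :
    unifDisc T (Ioo a b) ≤ (T : ℝ≥0∞)⁻¹ * ⌈b - a⌉₊ :=
  calc unifDisc T (Ioo a b)
      = (T : ℝ≥0∞)⁻¹ * ((Finset.Icc 1 T).filter fun k : ℕ => (k : ℝ) ∈ Ioo a b).card := by
        simp [unifDisc, Set.indicator_apply]
    _ ≤ (T : ℝ≥0∞)⁻¹ * ⌈b - a⌉₊ := by
        gcongr
        exact card_filter_natCast_mem_Ioo_le _ a b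

theorem unifDisc_ball_le {T : ℕ} (hT : T ≠ 0) (t : ℝ) (b : ℕ) :
    unifDisc T (Metric.ball t b) ≤ ENNReal.ofReal (2 * (b / T)) := by
  have hlength : t + b - (t - b) = (2 * b : ℕ) := by push_cast; ring
  have hT' : (0 : ℝ) < T := by positivity
  calc unifDisc T (Metric.ball t b) ≤ (T : ℝ≥0∞)⁻¹ * (2 * b : ℕ) := by
        simpa only [Real.ball_eq_Ioo, hlength, Nat.ceil_natCast] using
          unifDisc_Ioo_le T (t - b) (t + b)
    _ = ENNReal.ofReal ((T : ℝ)⁻¹ * (2 * b : ℕ)) := by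
        rw [ENNReal.ofReal_mul (by positivity), ENNReal.ofReal_inv_of_pos hT',
          ENNReal.ofReal_natCast, ENNReal.ofReal_natCast]
    _ = ENNReal.ofReal (2 * (b / T)) := by
        congr 1
        push_cast
        ring

theorem lintegral_natCast_eq_ofReal_lmdMean {ψ : Measure ℕ}
    (hψ : Integrable (fun k : ℕ => (k : ℝ)) ψ) :
    ∫⁻ k, (k : ℝ≥0∞) ∂ψ = ENNReal.ofReal (lmdMean ψ) := by
  rw [lmdMean, ofReal_integral_eq_lintegral_ofReal hψ (ae_of_all _ fun k => k.cast_nonneg)]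
  simp only [ENNReal.ofReal_natCast]

theorem discModel_contains_le {VH V : Type*} [Finite VH] [Fintype V] [DecidableEq V]
    {H : SimpleGraph VH} (P : Sym2 VH → Sym2 VH → Prop) {I : H.Subgraph}
    (hI : I.edgeSet.Nonempty) {ψ : Measure ℕ} [IsProbabilityMeasure ψ]
    (hψ : Integrable (fun k : ℕ => (k : ℝ)) ψ) {b T : ℕ} (hbT : b ≤ T) :
    discModel V ψ T {ω | Contains H P (toTGraph ω) b} ≤
      ENNReal.ofReal ((Fintype.card V : ℝ) ^ I.verts.ncard *
        (lmdMean ψ * (lmdMean ψ * (2 * (b / T))) ^ (I.edgeSet.ncard - 1))) := by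
  obtain rfl | hb := eq_or_ne b 0
  · have hempty : {ω : Sym2 V → LabelSpace | Contains H P (toTGraph ω) ((0 : ℕ) : ℝ)} = ∅ :=
      eq_empty_of_forall_notMem fun ω hω => by
        simpa using Contains.pos hω (hI.mono I.edgeSet_subset)
    rw [hempty, measure_empty]
    exact zero_le
  have hT : T ≠ 0 := by omega
  have := isProbabilityMeasure_unifDisc hT
  have hmean : 0 ≤ lmdMean ψ := integral_nonneg fun k => k.cast_nonneg
  have hcoe : I.coe.edgeSet.ncard = I.edgeSet.ncard := by
    rw [← I.image_coe_edgeSet_coe,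
      ncard_image_of_injective _ (Sym2.map.injective Subtype.val_injective)]
  have hne : I.coe.edgeSet.Nonempty := by
    rwa [← I.image_coe_edgeSet_coe, image_nonempty] at hI
  calc discModel V ψ T {ω | Contains H P (toTGraph ω) b}
      ≤ discModel V ψ T {ω | Contains I.coe (Sym2.map I.hom ⁻¹'o P) (toTGraph ω) b} :=
        measure_mono fun ω hω => Contains.comp_hom hω I.hom I.hom_injective
    _ ≤ _ := model_contains_le hne _ ψ fun t => unifDisc_ball_le hT t b
    _ = _ := by
        rw [hcoe, Nat.card_coe_set_eq, lintegral_natCast_eq_ofReal_lmdMean hψ,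
          ← ENNReal.ofReal_mul hmean, ← ENNReal.ofReal_pow (by positivity),
          ← ENNReal.ofReal_mul hmean, ← ENNReal.ofReal_natCast,
          ← ENNReal.ofReal_pow (by positivity), ← ENNReal.ofReal_mul (by positivity)]

end Discrete

section Threshold

theorem exists_subgraph_sparsity_mul_eq {VH : Type*} [Finite VH] {H : SimpleGraph VH}
    (hH : 2 ≤ H.edgeSet.ncard) :
    ∃ I : H.Subgraph, 2 ≤ I.edgeSet.ncard ∧
      sparsity H * (I.edgeSet.ncard - 1 : ℕ) = I.verts.ncard := by
  obtain ⟨I, hI, hρ⟩ : sparsity H ∈ {x : ℝ | ∃ I : H.Subgraph, 2 ≤ I.edgeSet.ncard ∧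
      x = (I.verts.ncard : ℝ) / ((I.edgeSet.ncard : ℝ) - 1)} := by
    refine Nonempty.csInf_mem ⟨_, ⊤, by simpa using hH, rfl⟩
      ((finite_range fun I : H.Subgraph =>
        (I.verts.ncard : ℝ) / ((I.edgeSet.ncard : ℝ) - 1)).subset ?_)
    rintro x ⟨I, -, rfl⟩
    exact mem_range_self I
  refine ⟨I, hI, ?_⟩
  have hI' : (2 : ℝ) ≤ I.edgeSet.ncard := by exact_mod_cast hI
  rw [hρ, Nat.cast_sub (by omega), Nat.cast_one, div_mul_cancel₀ _ (by linarith)]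

theorem tendsto_pow_mul_pow_of_tendsto_mul_rpow {u : ℕ → ℝ} {ρ : ℝ} {v m : ℕ} (hm : m ≠ 0)
    (hρ : ρ * m = v) (hu : Tendsto (fun n : ℕ => u n * (n : ℝ) ^ ρ) atTop (𝓝 0)) :
    Tendsto (fun n : ℕ => (n : ℝ) ^ v * u n ^ m) atTop (𝓝 0) := by
  have hpow (n : ℕ) : (n : ℝ) ^ v * u n ^ m = (u n * (n : ℝ) ^ ρ) ^ m := by
    rw [mul_pow, ← Real.rpow_mul_natCast n.cast_nonneg, hρ, Real.rpow_natCast, mul_comm]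
  simpa only [hpow, zero_pow hm] using hu.pow m

theorem statement3_general {VH : Type*} [Finite VH] (H : SimpleGraph VH)
    (hH : 2 ≤ H.edgeSet.ncard) (P : Sym2 VH → Sym2 VH → Prop)
    (ψ : Measure ℕ) [IsProbabilityMeasure ψ] (hψ : Integrable (fun k : ℕ => (k : ℝ)) ψ)
    (β T : ℕ → ℕ) (hβT : ∀ n, β n ≤ T n)
    (hthr : Tendsto (fun n : ℕ => (β n : ℝ) / (T n : ℝ) * (n : ℝ) ^ sparsity H)
      atTop (𝓝 0)) :
    Tendsto (fun n : ℕ =>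
        discModel (Fin n) ψ (T n) {ω | Contains H P (toTGraph ω) (β n : ℝ)})
      atTop (𝓝 0) := by
  obtain ⟨I, hI, hρ⟩ := exists_subgraph_sparsity_mul_eq hH
  have hbound (n : ℕ) := discModel_contains_le (V := Fin n) P
    (nonempty_of_ncard_ne_zero (by omega : I.edgeSet.ncard ≠ 0)) hψ (hβT n)
  have hlim := ENNReal.tendsto_ofReal <|
    (tendsto_pow_mul_pow_of_tendsto_mul_rpow (by omega) hρ hthr).const_mul
      (lmdMean ψ * (lmdMean ψ * 2) ^ (I.edgeSet.ncard - 1))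
  rw [mul_zero, ENNReal.ofReal_zero] at hlim
  refine tendsto_of_tendsto_of_tendsto_of_le_of_le tendsto_const_nhds hlim
    (fun _ => zero_le) fun n => (hbound n).trans_eq ?_
  rw [Fintype.card_fin]
  congr 1
  ring

end Threshold

/-- If `β(n)/T(n)·n^{ρ_H} → 0` (and `β(n)` is eventually at least the
height of `P`), then a sample of `Γ_{[n]}(ψ, T(n))` contains `(H, P)` as a
`β(n)`-temporal motif with probability tending to `0`. -/
theorem statement3 {VH : Type} [Fintype VH] [DecidableEq VH] (H : SimpleGraph VH)
    (hH : 2 ≤ H.edgeSet.ncard)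
    (P : Sym2 VH → Sym2 VH → Prop) (hP : StrictPartialOrderOn H.edgeSet P)
    (ψ : Measure ℕ) (hψ : IsLMD ψ)
    (β T : ℕ → ℕ) (hβT : ∀ n, β n ≤ T n)
    (hheight : ∃ n₀ : ℕ, ∀ n ≥ n₀, ∀ s : Finset (Sym2 VH),
      ↑s ⊆ H.edgeSet → IsChain P ↑s → s.card ≤ β n)
    (hthr : Tendsto (fun n : ℕ => (β n : ℝ) / (T n : ℝ) * (n : ℝ) ^ sparsity H)
      atTop (𝓝 0)) :
    Tendsto (fun n : ℕ =>
        discModel (Fin n) ψ (T n) {ω | Contains H P (toTGraph ω) (β n : ℝ)})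
      atTop (𝓝 0) := by
  have := hψ.1
  exact statement3_general H hH P ψ hψ.2.1 β T hβT hthr

end RTG
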